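/- Let d ∈ ℕ with d ≥ 2 and let (e_n) be a sequence of real numbers with e_n ≥ 1. Then there exists a sequence (c_n) of positive real numbers with c_n ≥ 1 and |c_n − e_n| ≤ 2^(d+8)/(log₂ n)^(1/d) for all n ≥ 2, such that for every real α > 3, a random sequence (S_n) in the probability space 𝒢_{(c_n)} almost surely satisfies limsup_{n→∞} F_n(S_n)·(log₂ n)^(−α/d) < ∞; that is, ℙ[ limsup_{n→∞} F_n(S_n)·(log₂ n)^(−α/d) < ∞ ] = 1. -/

import Mathlib

open MeasureTheory

/-- Euclidean distance between two points of the integer lattice `ℤ^d`. -/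
noncomputable def zdist {d : ℕ} (x y : Fin d → ℤ) : ℝ :=
  Real.sqrt (∑ i, ((x i : ℝ) - (y i : ℝ)) ^ 2)

/-- The grid `{1,…,n}^d` as a finset of `ℤ^d`. -/
noncomputable def grid (d n : ℕ) : Finset (Fin d → ℤ) :=
  Fintype.piFinset fun _ => Finset.Icc 1 (n : ℤ)

/-- `F_n(S)`: the least Lipschitz constant (Euclidean metric) of a surjection of `S`
onto the grid `{1,…,n}^d`. -/
noncomputable def Fleast (d n : ℕ) (S : Finset (Fin d → ℤ)) : ℝ :=
  sInf {L : ℝ | ∃ f : (Fin d → ℤ) → (Fin d → ℤ),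
    (∀ x ∈ S, f x ∈ grid d n) ∧
    (∀ y ∈ grid d n, ∃ x ∈ S, f x = y) ∧
    (∀ x ∈ S, ∀ y ∈ S, zdist (f x) (f y) ≤ L * zdist x y)}

/-- The grid `{1,…,m}^d` (with `m : ℤ`), as a finite type. -/
abbrev gridPt (d : ℕ) (m : ℤ) : Type := Fin d → (Finset.Icc (1 : ℤ) m : Finset ℤ)

/-- The space of configurations of `N` points inside the grid `{1,…,m}^d`. -/
abbrev Config (d : ℕ) (m : ℤ) (N : ℕ) : Type := {S : Finset (gridPt d m) // S.card = N}

/-- A configuration in `gridPt d m`, regarded as a finset of the integer lattice. -/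
def toLattice {d : ℕ} {m : ℤ} (S : Finset (gridPt d m)) : Finset (Fin d → ℤ) :=
  S.image fun x i => (x i : ℤ)

instance (d : ℕ) (m : ℤ) (N : ℕ) : MeasurableSpace (Config d m N) := ⊤


lemma choose_bd (j : ℕ) : ∀ M N : ℕ, N ≤ M → j ≤ N →
    ((M - j).choose (N - j) : ℝ) * (M:ℝ)^j ≤ (M.choose N : ℝ) * (N:ℝ)^j := by
  induction j with
  | zero => intro M N _ _; simp
  | succ j ih =>
    intro M N hNM hj
    have h := ih M N hNM (by omega)
    have e : (M - j) * (M-(j+1)).choose (N-(j+1)) = (M-j).choose (N-j) * (N-j) := by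
      have := Nat.add_one_mul_choose_eq (M-(j+1)) (N-(j+1))
      simpa [Nat.succ_eq_add_one, show M-(j+1)+1 = M-j by omega, show N-(j+1)+1 = N-j by omega] using this
    have e' : ((M:ℝ) - j) * ((M-(j+1)).choose (N-(j+1)) : ℝ) = ((M-j).choose (N-j) : ℝ) * ((N:ℝ)-j) := by
      have := congrArg (Nat.cast (R := ℝ)) e
      push_cast [Nat.cast_sub (show j ≤ M by omega), Nat.cast_sub (show j ≤ N by omega)] at this
      exact this
    have hM : (0:ℝ) < (M:ℝ) - j := by
      have : (j:ℝ) + 1 ≤ M := by exact_mod_cast (by omega : j + 1 ≤ M)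
      linarith
    have hN : (N:ℝ) ≤ M := by exact_mod_cast hNM
    have hjN : (j:ℝ) ≤ N := by exact_mod_cast (by omega : j ≤ N)
    set a : ℝ := ((M-(j+1)).choose (N-(j+1)) : ℝ)
    set b : ℝ := ((M-j).choose (N-j) : ℝ)
    have hb : 0 ≤ b := by positivity
    -- a * M ≤ b * N
    have key : a * M ≤ b * N := by
      have : (M - j : ℝ) * (a * M) ≤ (M - j : ℝ) * (b * N) := by
        have : (M - j : ℝ) * (a * M) = b * ((N:ℝ)-j) * M := by rw [← e']; ring
        rw [this]
        have : b * (((N:ℝ)-j) * M) ≤ b * ((M - j : ℝ) * N) := by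
          apply mul_le_mul_of_nonneg_left _ hb
          nlinarith [Nat.cast_nonneg (α := ℝ) j]
        linarith
      exact le_of_mul_le_mul_left this hM
    calc a * (M:ℝ)^(j+1) = (a * M) * (M:ℝ)^j := by ring
      _ ≤ (b * N) * (M:ℝ)^j := by gcongr
      _ = (b * (M:ℝ)^j) * N := by ring
      _ ≤ ((M.choose N : ℝ) * (N:ℝ)^j) * N := by gcongr
      _ = _ := by ring

open Finset in
lemma count_sup {V : Type*} [Fintype V] [DecidableEq V] (N : ℕ) (hN : N ≤ Fintype.card V) (J : Finset V) :
    (#{S ∈ powersetCard N (univ : Finset V) | J ⊆ S} : ℝ) ≤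
      ((Fintype.card V).choose N : ℝ) * ((N:ℝ) / Fintype.card V)^(#J) := by
  by_cases hj : #J ≤ N
  · have h1 : #{S ∈ powersetCard N (univ : Finset V) | J ⊆ S} ≤ #(powersetCard (N - #J) (univ \ J)) := by
      apply card_le_card_of_injOn (fun S => S \ J)
      · intro S hS
        simp only [coe_filter, mem_powersetCard, Set.mem_ofPred_eq] at hS
        simp only [mem_coe, mem_powersetCard]
        refine ⟨sdiff_subset_sdiff (subset_univ _) le_rfl, ?_⟩
        rw [card_sdiff_of_subset hS.2, hS.1.2]
      · intro S hS T hT h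
        simp only [coe_filter, mem_powersetCard, Set.mem_ofPred_eq] at hS hT h
        rw [← sdiff_union_of_subset hS.2, h, sdiff_union_of_subset hT.2]
    rw [card_powersetCard, card_sdiff_of_subset (subset_univ _), card_univ] at h1
    have h2 := choose_bd (#J) _ _ hN hj
    rcases Nat.eq_zero_or_pos (Fintype.card V) with h0 | h0
    · have : #J = 0 := by have := card_le_univ J; omega
      rw [this] at h1 ⊢
      simp at h1 ⊢
      exact_mod_cast h1
    · have hp : (0:ℝ) < Fintype.card V := by exact_mod_cast h0
      rw [div_pow, ← mul_div_assoc, le_div_iff₀ (by positivity)]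
      refine le_trans ?_ h2
      gcongr
  · have : #{S ∈ powersetCard N (univ : Finset V) | J ⊆ S} = 0 := by
      rw [card_eq_zero, filter_eq_empty_iff]
      intro S hS h
      have := card_le_card h
      rw [(mem_powersetCard.1 hS).2] at this
      omega
    rw [this]; push_cast; positivity

open Finset in
lemma mgf_pos {V : Type*} [Fintype V] [DecidableEq V] (N : ℕ) (hN : N ≤ Fintype.card V) (B : Finset V)
    (θ : ℝ) (hθ : 0 ≤ θ) :
    ∑ S ∈ powersetCard N (univ : Finset V), (1+θ)^(#(S ∩ B)) ≤
      ((Fintype.card V).choose N : ℝ) * (1 + θ * ((N:ℝ) / Fintype.card V))^(#B) := by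
  have e : ∀ (C : Finset V) (t : ℝ), (1+t)^(#C) = ∑ J ∈ C.powerset, t^(#J) := by
    intro C t
    have := Finset.sum_pow_mul_eq_add_pow t 1 C
    simp only [one_pow, mul_one] at this
    rw [this, add_comm]
  have e2 : ∀ S : Finset V, (1+θ)^(#(S ∩ B)) = ∑ J ∈ B.powerset, if J ⊆ S then θ^(#J) else 0 := by
    intro S
    rw [e, ← sum_filter]
    apply sum_congr _ (fun _ _ => rfl)
    ext J; rw [mem_powerset, subset_inter_iff, mem_filter, mem_powerset, and_comm]
  simp_rw [e2]
  rw [sum_comm, e, mul_sum]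
  apply sum_le_sum
  intro J _
  rw [← sum_filter, sum_const, nsmul_eq_mul, mul_pow]
  have := count_sup N hN J
  calc _ ≤ (((Fintype.card V).choose N : ℝ) * ((N:ℝ) / Fintype.card V)^(#J)) * θ ^ #J := by gcongr
    _ = _ := by ring

open Finset in
lemma mgf_exp {V : Type*} [Fintype V] [DecidableEq V] (N : ℕ) (hN : N ≤ Fintype.card V)
    (h0 : 0 < Fintype.card V) (B : Finset V) (h : ℝ) :
    ∑ S ∈ powersetCard N (univ : Finset V), Real.exp (h * #(S ∩ B)) ≤
      ((Fintype.card V).choose N : ℝ) * Real.exp ((N:ℝ) / Fintype.card V * #B * (Real.exp h - 1)) := by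
  have hp : (0:ℝ) < Fintype.card V := by exact_mod_cast h0
  have hNr : (N:ℝ) ≤ Fintype.card V := by exact_mod_cast hN
  set q : ℝ := (N:ℝ) / Fintype.card V with hq
  have hq0 : 0 ≤ q := by positivity
  have hq1 : q ≤ 1 := by rw [hq, div_le_one hp]; exact hNr
  have main : ∑ S ∈ powersetCard N (univ : Finset V), Real.exp (h * #(S ∩ B)) ≤
      ((Fintype.card V).choose N : ℝ) * (1 + q * (Real.exp h - 1)) ^ #B := by
    rcases le_total 0 h with hh | hh
    · have := mgf_pos N hN B (Real.exp h - 1) (by linarith [Real.add_one_le_exp h])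
      rw [← hq] at this
      refine le_trans (le_of_eq ?_) (this.trans (le_of_eq (by ring)))
      apply sum_congr rfl; intro S _
      rw [mul_comm, Real.exp_nat_mul]; congr 1; ring
    · have := mgf_pos (Fintype.card V - N) (Nat.sub_le _ _) B (Real.exp (-h) - 1)
        (by linarith [Real.add_one_le_exp (-h)])
      have e1 : ∑ S ∈ powersetCard N (univ : Finset V), Real.exp (h * #(S ∩ B)) =
          Real.exp h ^ #B * ∑ S ∈ powersetCard (Fintype.card V - N) (univ : Finset V),
            (1 + (Real.exp (-h) - 1)) ^ #(S ∩ B) := by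
        rw [mul_sum]
        refine sum_bij' (fun S _ => Sᶜ) (fun S _ => Sᶜ) ?_ ?_ ?_ ?_ ?_
        · intro S hS; simp only [mem_powersetCard, subset_univ, true_and] at hS ⊢
          rw [card_compl, hS]
        · intro S hS; simp only [mem_powersetCard, subset_univ, true_and] at hS ⊢
          rw [card_compl, hS]; omega
        · intro S _; simp
        · intro S _; simp
        · intro S hS
          have hc : #(S ∩ B) + #(Sᶜ ∩ B) = #B := by
            rw [← card_inter_add_card_sdiff B S, inter_comm B S]; congr 2
            ext x; simp [and_comm]
          rw [← Real.exp_nat_mul, show 1 + (Real.exp (-h) - 1) = Real.exp (-h) by ring,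
            ← Real.exp_nat_mul, ← Real.exp_add, ← hc]
          congr 1; push_cast; ring
      rw [e1, Nat.choose_symm hN] at *
      calc _ ≤ Real.exp h ^ #B * _ := mul_le_mul_of_nonneg_left this (by positivity)
        _ = _ := by
          rw [mul_left_comm, ← mul_pow]
          congr 2
          rw [Nat.cast_sub hN, sub_div, div_self hp.ne', ← hq, Real.exp_neg]
          field_simp
          ring
  refine main.trans ?_
  gcongr
  rw [show q * #B * (Real.exp h - 1) = (#B : ℝ) * (q * (Real.exp h - 1)) by ring, Real.exp_nat_mul]
  have : 0 ≤ 1 + q * (Real.exp h - 1) := by nlinarith [Real.exp_pos h]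
  gcongr
  linarith [Real.add_one_le_exp (q * (Real.exp h - 1))]

open Finset in
lemma tail {V : Type*} [Fintype V] [DecidableEq V] (N : ℕ) (hN : N ≤ Fintype.card V)
    (h0 : 0 < Fintype.card V) (B : Finset V) (lam t : ℝ) (hl : (N:ℝ) / Fintype.card V * #B = lam)
    (hlam : 0 < lam) (ht : 0 ≤ t) (htl : t ≤ lam) :
    (#{S ∈ powersetCard N (univ : Finset V) | t < |(#(S ∩ B) : ℝ) - lam|} : ℝ) ≤
      ((Fintype.card V).choose N : ℝ) * (2 * Real.exp (-(t^2/(4*lam)))) := by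
  set u := t / (2*lam) with hu
  have hu0 : 0 ≤ u := by positivity
  have hu1 : u ≤ 1 := by rw [hu, div_le_one (by positivity)]; linarith
  have P : ∀ h : ℝ, |h| ≤ 1 → 
     ∑ S ∈ powersetCard N (univ : Finset V), Real.exp (h * (#(S ∩ B) - lam)) ≤ 
       ((Fintype.card V).choose N : ℝ) * Real.exp (lam * h^2) := by
    intro h hh
    have := mgf_exp N hN h0 B h
    rw [hl] at this
    have h3 := Real.abs_exp_sub_one_sub_id_le hh
    have h4 := (abs_le.1 h3).2
    calc ∑ S ∈ powersetCard N (univ : Finset V), Real.exp (h * (#(S ∩ B) - lam))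
        = (∑ S ∈ powersetCard N (univ : Finset V), Real.exp (h * #(S ∩ B))) * Real.exp (-(h*lam)) := by
          rw [sum_mul]; apply sum_congr rfl; intro S _; rw [← Real.exp_add]; congr 1; ring
      _ ≤ (((Fintype.card V).choose N : ℝ) * Real.exp (lam * (Real.exp h - 1))) * Real.exp (-(h*lam)) := by gcongr
      _ = ((Fintype.card V).choose N : ℝ) * Real.exp (lam * (Real.exp h - 1 - h)) := by
          rw [mul_assoc, ← Real.exp_add]; congr 2; ring
      _ ≤ _ := by gcongr
  have P1 := P u (by rw [abs_of_nonneg hu0]; exact hu1)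
  have P2 := P (-u) (by rw [abs_neg, abs_of_nonneg hu0]; exact hu1)
  rw [neg_sq] at P2
  have Q : (#{S ∈ powersetCard N (univ : Finset V) | t < |(#(S ∩ B) : ℝ) - lam|} : ℝ) * Real.exp (u * t) ≤
     ∑ S ∈ powersetCard N (univ : Finset V), (Real.exp (u * (#(S ∩ B) - lam)) + Real.exp (-u * (#(S ∩ B) - lam))) := by
    rw [← nsmul_eq_mul]
    refine (card_nsmul_le_sum _ (fun S => (Real.exp (u * (#(S ∩ B) - lam)) + Real.exp (-u * (#(S ∩ B) - lam)))) _ ?_).trans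
      (sum_le_sum_of_subset_of_nonneg (filter_subset _ _) (fun _ _ _ => by positivity))
    intro S hS
    have := (mem_filter.1 hS).2
    rcases lt_abs.1 this with h | h
    · have : Real.exp (u*t) ≤ Real.exp (u * (#(S ∩ B) - lam)) := by gcongr
      linarith [Real.exp_pos (-u * (#(S ∩ B) - lam))]
    · have : Real.exp (u*t) ≤ Real.exp (-u * (#(S ∩ B) - lam)) := by
        apply Real.exp_le_exp.2; nlinarith
      linarith [Real.exp_pos (u * (#(S ∩ B) - lam))]
  rw [sum_add_distrib] at Q
  have R := Q.trans (add_le_add P1 P2)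
  rw [← le_div_iff₀ (Real.exp_pos _)] at R
  refine R.trans (le_of_eq ?_)
  rw [← two_mul, mul_div_assoc, mul_div_assoc, ← Real.exp_sub, mul_left_comm]
  congr 3
  rw [hu]; field_simp; ring

noncomputable def bx {d : ℕ} (k l : ℕ) (X : Finset (Fin d → ℕ)) (r a : Fin d → ℕ) : Finset (Fin d → ℕ) :=
  X.filter (fun x => ∀ i, x i / (l * 2^(k - r i)) = a i)

lemma bx_zero_compl {d : ℕ} (k l : ℕ) (X : Finset (Fin d → ℕ)) (hX : ∀ x ∈ X, ∀ i, x i < l * 2^k) :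
    bx k l X 0 0 = X := by
  apply Finset.filter_true_of_mem
  intro x hx i
  simpa using Nat.div_eq_of_lt (hX x hx i)

lemma prod_scale {d : ℕ} (f g : Fin d → ℝ) (i : Fin d) (p : ℝ) (h1 : f i = p * g i)
    (h2 : ∀ j, j ≠ i → f j = g j) : ∏ j, f j = p * ∏ j, g j := by
  rw [← Finset.mul_prod_erase _ _ (Finset.mem_univ i), ← Finset.mul_prod_erase _ g (Finset.mem_univ i), h1,
    mul_assoc]
  congr 2
  apply Finset.prod_congr rfl
  intro j hj
  exact h2 j (Finset.ne_of_mem_erase hj)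

lemma div_child (k l r y : ℕ) (hr : r < k) : 
    y / (l * 2^(k - r)) = (y / (l * 2^(k-(r+1)))) / 2 := by
  rw [Nat.div_div_eq_div_mul, mul_assoc, ← pow_succ]
  congr 3; omega

/-- splitting -/
lemma bx_split {d : ℕ} (k l : ℕ) (X : Finset (Fin d → ℕ)) (r a : Fin d → ℕ) (i : Fin d) (hr : r i < k) (e : ℕ) (he : e < 2)
    (x : Fin d → ℕ) :
    x ∈ bx k l X (Function.update r i (r i + 1)) (Function.update a i (2 * a i + e)) ↔
      x ∈ bx k l X r a ∧ (x i / (l * 2^(k-(r i+1)))) % 2 = e := by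
  unfold bx
  simp only [Finset.mem_filter, and_assoc]
  apply and_congr_right
  intro _
  constructor
  · intro h
    have hi := h i
    simp only [Function.update_self] at hi
    refine ⟨?_, by omega⟩
    intro j
    by_cases hj : j = i
    · subst hj
      rw [div_child _ _ _ _ hr]; omega
    · simpa [Function.update_of_ne hj] using h j
  · rintro ⟨h, h2⟩ j
    by_cases hj : j = i
    · subst hj
      have := h j
      rw [div_child _ _ _ _ hr] at this
      simp only [Function.update_self]
      omega
    · simpa [Function.update_of_ne hj] using h j

theorem tree {d : ℕ} (k l n : ℕ) (hl : 0 < l) (X : Finset (Fin d → ℕ)) (δ : ℝ) (hδ : 0 ≤ δ)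
    (hsplit : ∀ r a : Fin d → ℕ, ∀ i, (∀ j, r j ≤ k) → r i < k → (∀ j, r i ≤ r j) → (∀ j, r j ≤ r i + 1) →
      |((bx k l X (Function.update r i (r i + 1)) (Function.update a i (2 * a i))).card : ℝ) -
        (bx k l X (Function.update r i (r i + 1)) (Function.update a i (2 * a i + 1))).card| * ((n:ℝ) / 2^(r i))
        ≤ 2 * δ * (bx k l X r a).card) :
    ∀ T : ℕ, ∀ r a : Fin d → ℕ, ∑ i, (k - r i) = T → (∀ j, r j ≤ k) → (∀ i j, r i ≤ r j + 1) →
      ∀ (α β : Fin d → ℝ) (E : ℝ), (∀ i, α i ≤ β i) → ∏ i, (β i - α i) = (bx k l X r a).card →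
      (∀ i, |α i - a i * ((n:ℝ) / 2^(r i))| ≤ E) → (∀ i, |β i - (a i + 1) * ((n:ℝ) / 2^(r i))| ≤ E) →
      ∃ ρ : (Fin d → ℕ) → Set (Fin d → ℝ), (∀ x ∈ bx k l X r a, MeasurableSet (ρ x) ∧ 
          ρ x ⊆ Set.pi Set.univ (fun i => Set.Ioc (α i) (β i)) ∧
          ∀ z ∈ ρ x, ∀ i, |z i - x i * ((n:ℝ) / (l * 2^k))| ≤ (n:ℝ)/2^k + E + T * δ) ∧
        ∀ U ⊆ bx k l X r a, (U.card : ENNReal) ≤ volume (⋃ x ∈ U, ρ x) := by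
  intro T
  induction T with
  | zero =>
    intro r a hT hk hbal α β E hab hprod hα hβ
    have hr : ∀ i, r i = k := by
      intro i
      have := (Finset.sum_eq_zero_iff.1 hT) i (Finset.mem_univ i)
      have := hk i
      omega
    refine ⟨fun _ => Set.pi Set.univ (fun i => Set.Ioc (α i) (β i)), ?_, ?_⟩
    · intro x hx
      refine ⟨MeasurableSet.univ_pi (fun i => measurableSet_Ioc), le_rfl, ?_⟩
      intro z hz i
      have hx' := (Finset.mem_filter.1 hx).2 i
      have hzi := hz i (Set.mem_univ i)
      have h1 := hα i
      have h2 := hβ i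
      rw [hr i] at hx' h1 h2
      simp only [Nat.sub_self, pow_zero, mul_one] at hx'
      have hlR : (0:ℝ) < l := by exact_mod_cast hl
      have hx1 : (a i : ℝ) ≤ x i / l := by
        rw [le_div_iff₀ hlR, ← hx']; exact_mod_cast Nat.div_mul_le_self _ _
      have hx2 : (x i : ℝ) / l ≤ a i + 1 := by
        rw [div_le_iff₀ hlR, ← hx']
        have := Nat.lt_div_mul_add (a := x i) hl
        have : x i ≤ (x i / l + 1) * l := by rw [add_mul]; omega
        exact_mod_cast this
      have e : (x i : ℝ) * ((n:ℝ) / (l * 2^k)) = x i / l * ((n:ℝ)/2^k) := by field_simp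
      rw [e]
      set s := (n:ℝ)/2^k
      have hs : 0 ≤ s := by positivity
      have g1 := mul_le_mul_of_nonneg_right hx1 hs
      have g2 := mul_le_mul_of_nonneg_right hx2 hs
      rw [abs_le] at *
      constructor <;> push_cast <;> nlinarith [hzi.1, hzi.2]
    · intro U hU
      rcases U.eq_empty_or_nonempty with h | ⟨x, hx⟩
      · simp [h]
      · have : Set.pi Set.univ (fun i => Set.Ioc (α i) (β i)) ⊆ ⋃ x ∈ U, Set.pi Set.univ (fun i => Set.Ioc (α i) (β i)) :=
          Set.subset_biUnion_of_mem (u := fun _ => Set.pi Set.univ (fun i => Set.Ioc (α i) (β i))) hx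
        refine le_trans ?_ (measure_mono this)
        rw [Real.volume_pi_Ioc, ← ENNReal.ofReal_prod_of_nonneg (fun i _ => by linarith [hab i]), hprod,
          ENNReal.ofReal_natCast]
        exact_mod_cast Finset.card_le_card hU
  | succ T ih =>
    intro r a hT hk hbal α β E hab hprod hα hβ
    have hd : Nonempty (Fin d) := by
      by_contra h
      rw [not_nonempty_iff] at h
      simp at hT
    obtain ⟨i, hi⟩ := Finite.exists_min r
    have hri : r i < k := by
      by_contra h
      have : ∑ i, (k - r i) = 0 := Finset.sum_eq_zero (fun j _ => by have := hi j; omega)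
      omega
    rcases Finset.eq_empty_or_nonempty (bx k l X r a) with hem | hne
    · refine ⟨fun _ => ∅, ?_, ?_⟩
      · rw [hem]; simp
      · rw [hem]; intro U hU; rw [Finset.subset_empty.1 hU]; simp
    have hN : (0:ℝ) < (bx k l X r a).card := by exact_mod_cast hne.card_pos
    have hs := hsplit r a i hk hri hi (fun j => hbal j i)
    have hmL := bx_split k l X r a i hri 0 (by norm_num)
    have hmR := bx_split k l X r a i hri 1 (by norm_num)
    rw [add_zero] at hmL
    set r' := Function.update r i (r i + 1) with hr'
    set aL := Function.update a i (2 * a i) with haL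
    set aR := Function.update a i (2 * a i + 1) with haR
    set XL := bx k l X r' aL with hXL
    set XR := bx k l X r' aR with hXR
    have hcard : XL.card + XR.card = (bx k l X r a).card := by
      have hdisj : Disjoint XL XR := by
        rw [Finset.disjoint_left]
        intro x h1 h2
        have h1 := ((hmL x).1 h1).2
        have h2 := ((hmR x).1 h2).2
        omega
      rw [← Finset.card_union_of_disjoint hdisj]
      congr 1
      ext x
      rw [Finset.mem_union, hmL, hmR, ← and_or_left]
      have := Nat.mod_two_eq_zero_or_one (x i / (l * 2^(k-(r i+1))))
      tauto
    have hcardR : (XL.card : ℝ) + XR.card = (bx k l X r a).card := by exact_mod_cast hcard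
    set N : ℝ := (((bx k l X r a).card : ℕ) : ℝ) with hNdef
    set p : ℝ := (XL.card : ℝ) / N with hp
    have hp0 : 0 ≤ p := by positivity
    have hpN : p * N = XL.card := by rw [hp]; field_simp
    have hp1 : p ≤ 1 := by
      rw [hp, div_le_one hN]; have : (0:ℝ) ≤ XR.card := by positivity
      linarith
    set s : ℝ := (n:ℝ)/2^(r i) with hsdef
    have hs0 : 0 ≤ s := by positivity
    have hps : |p - 1/2| * s ≤ δ := by
      have : (XL.card : ℝ) - XR.card = 2 * N * (p - 1/2) := by linarith
      rw [this, abs_mul, abs_of_pos (by positivity)] at hs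
      have : N * (|p-1/2| * s) ≤ N * δ := by linarith
      exact le_of_mul_le_mul_left this hN
    set mid : ℝ := α i + p * (β i - α i) with hmid
    have hmid1 : α i ≤ mid := by have := hab i; rw [hmid]; nlinarith
    have hmid2 : mid ≤ β i := by have := hab i; rw [hmid]; nlinarith
    have hmidE : |mid - (2 * a i + 1) * (s/2)| ≤ E + δ := by
      have e : mid - (2 * a i + 1) * (s/2) =
        (1-p) * (α i - a i * s) + p * (β i - (a i + 1) * s) + (p-1/2)*s := by rw [hmid]; ring
      rw [e]
      have h1 := hα i
      have h2 := hβ i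
      have h3 : |(p-1/2)*s| ≤ δ := by rw [abs_mul, abs_of_nonneg hs0]; exact hps
      rw [abs_le] at *
      constructor <;> nlinarith
    have hT' : ∑ j, (k - r' j) = T := by
      have h1 := Finset.add_sum_erase Finset.univ (fun j => k - r j) (Finset.mem_univ i)
      have h2 := Finset.add_sum_erase Finset.univ (fun j => k - r' j) (Finset.mem_univ i)
      have h3 : ∑ j ∈ Finset.univ.erase i, (k - r' j) = ∑ j ∈ Finset.univ.erase i, (k - r j) := by
        apply Finset.sum_congr rfl
        intro j hj
        rw [hr', Function.update_of_ne (Finset.ne_of_mem_erase hj)]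
      have h4 : r' i = r i + 1 := by rw [hr', Function.update_self]
      rw [h4] at h2
      omega
    have hk' : ∀ j, r' j ≤ k := by
      intro j
      by_cases hj : j = i
      · subst hj; rw [hr', Function.update_self]; omega
      · rw [hr', Function.update_of_ne hj]; exact hk j
    have hbal' : ∀ i j, r' i ≤ r' j + 1 := by
      intro j1 j2
      have q1 := hi j1
      have q2 := hi j2
      have q3 := hbal j1 i
      have q4 := hbal j1 j2
      by_cases h1 : j1 = i <;> by_cases h2 : j2 = i
      · subst h1; subst h2; omega
      · subst h1; rw [hr', Function.update_self, Function.update_of_ne h2]; omega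
      · subst h2; rw [hr', Function.update_self, Function.update_of_ne h1]; omega
      · rw [hr', Function.update_of_ne h1, Function.update_of_ne h2]; omega
    have hpow : (n:ℝ)/2^(r i + 1) = s/2 := by rw [hsdef, pow_succ]; field_simp
    obtain ⟨ρL, hL1, hL2⟩ := ih r' aL hT' hk' hbal' α (Function.update β i mid) (E+δ)
      (by
        intro j; by_cases hj : j = i
        · subst hj; rw [Function.update_self]; exact hmid1
        · rw [Function.update_of_ne hj]; exact hab j)
      (by
        rw [prod_scale _ (fun j => β j - α j) i p, hprod, hpN]
        · rw [Function.update_self, hmid]; ring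
        · intro j hj; rw [Function.update_of_ne hj])
      (by
        intro j; by_cases hj : j = i
        · subst hj; rw [hr', haL, Function.update_self, Function.update_self, hpow]
          have := hα j
          push_cast
          rw [show (2 * (a j:ℝ)) * (s/2) = a j * s by ring]; linarith
        · rw [hr', haL, Function.update_of_ne hj, Function.update_of_ne hj]; linarith [hα j])
      (by
        intro j; by_cases hj : j = i
        · subst hj; rw [hr', haL, Function.update_self, Function.update_self, Function.update_self, hpow]
          push_cast; exact hmidE
        · rw [hr', haL, Function.update_of_ne hj, Function.update_of_ne hj, Function.update_of_ne hj]; linarith [hβ j])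
    obtain ⟨ρR, hR1, hR2⟩ := ih r' aR hT' hk' hbal' (Function.update α i mid) β (E+δ)
      (by
        intro j; by_cases hj : j = i
        · subst hj; rw [Function.update_self]; exact hmid2
        · rw [Function.update_of_ne hj]; exact hab j)
      (by
        rw [prod_scale _ (fun j => β j - α j) i (1-p), hprod, sub_mul, hpN]
        · linarith
        · rw [Function.update_self, hmid]; ring
        · intro j hj; rw [Function.update_of_ne hj])
      (by
        intro j; by_cases hj : j = i
        · subst hj; rw [hr', haR, Function.update_self, Function.update_self, Function.update_self, hpow]
          push_cast; exact hmidE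
        · rw [hr', haR, Function.update_of_ne hj, Function.update_of_ne hj, Function.update_of_ne hj]; linarith [hα j])
      (by
        intro j; by_cases hj : j = i
        · subst hj; rw [hr', haR, Function.update_self, Function.update_self, hpow]
          have := hβ j
          push_cast
          rw [show (2 * (a j:ℝ) + 1 + 1) * (s/2) = (a j + 1) * s by ring]; linarith
        · rw [hr', haR, Function.update_of_ne hj, Function.update_of_ne hj]; linarith [hβ j])
    classical
    have hLR : ∀ x ∈ bx k l X r a, x ∉ XL → x ∈ XR := by
      intro x hx h
      rw [hmL] at h; rw [hmR]
      have := Nat.mod_two_eq_zero_or_one (x i / (l * 2^(k-(r i+1))))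
      tauto
    have hsubL : ∀ x ∈ XL, ρL x ⊆ Set.pi Set.univ (fun i => Set.Ioc (α i) (β i)) ∩ {z | z i ≤ mid} := by
      intro x hx z hz
      have h1 := (hL1 x hx).2.1 hz
      refine ⟨?_, ?_⟩
      · intro j _
        have := h1 j (Set.mem_univ j)
        beta_reduce at this ⊢
        by_cases hj : j = i
        · subst hj; rw [Function.update_self] at this; exact ⟨this.1, this.2.trans hmid2⟩
        · rw [Function.update_of_ne hj] at this; exact this
      · have := h1 i (Set.mem_univ i)
        beta_reduce at this
        rw [Function.update_self] at this; exact this.2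
    have hsubR : ∀ x ∈ XR, ρR x ⊆ Set.pi Set.univ (fun i => Set.Ioc (α i) (β i)) ∩ {z | mid < z i} := by
      intro x hx z hz
      have h1 := (hR1 x hx).2.1 hz
      refine ⟨?_, ?_⟩
      · intro j _
        have := h1 j (Set.mem_univ j)
        beta_reduce at this ⊢
        by_cases hj : j = i
        · subst hj; rw [Function.update_self] at this; exact ⟨hmid1.trans_lt this.1, this.2⟩
        · rw [Function.update_of_ne hj] at this; exact this
      · have := h1 i (Set.mem_univ i)
        beta_reduce at this
        rw [Function.update_self] at this; exact this.1
    refine ⟨fun x => if x ∈ XL then ρL x else ρR x, ?_, ?_⟩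
    · intro x hx
      by_cases h : x ∈ XL
      · simp only [h, if_true]
        refine ⟨(hL1 x h).1, fun z hz => (hsubL x h hz).1, fun z hz j => ?_⟩
        have := (hL1 x h).2.2 z hz j
        push_cast; linarith
      · simp only [h, if_false]
        have h := hLR x hx h
        refine ⟨(hR1 x h).1, fun z hz => (hsubR x h hz).1, fun z hz j => ?_⟩
        have := (hR1 x h).2.2 z hz j
        push_cast; linarith
    · intro U hU
      have h1 := hL2 (U.filter (· ∈ XL)) (fun x hx => (Finset.mem_filter.1 hx).2)
      have h2 := hR2 (U.filter (¬ · ∈ XL)) (fun x hx => hLR x (hU (Finset.mem_filter.1 hx).1) (Finset.mem_filter.1 hx).2)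
      rw [← Finset.card_filter_add_card_filter_not (· ∈ XL), Nat.cast_add]
      refine (add_le_add h1 h2).trans ?_
      rw [← measure_union]
      · apply measure_mono
        intro z hz
        rcases hz with hz | hz
        · simp only [Set.mem_iUnion, Finset.mem_filter] at hz ⊢
          obtain ⟨x, ⟨hx, hx2⟩, hz⟩ := hz
          exact ⟨x, hx, by simpa [hx2] using hz⟩
        · simp only [Set.mem_iUnion, Finset.mem_filter] at hz ⊢
          obtain ⟨x, ⟨hx, hx2⟩, hz⟩ := hz
          exact ⟨x, hx, by simpa [hx2] using hz⟩
      · rw [Set.disjoint_left]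
        intro z hz hz'
        simp only [Set.mem_iUnion, Finset.mem_filter] at hz hz'
        obtain ⟨x, ⟨hx, hx2⟩, hz⟩ := hz
        obtain ⟨y, ⟨hy, hy2⟩, hz'⟩ := hz'
        have q1 := (hsubL x hx2 hz).2
        have q2 := (hsubR y (hLR y (hU hy) hy2) hz').2
        exact absurd (show z i ≤ mid from q1) (not_le.2 q2)
      · apply Finset.measurableSet_biUnion
        intro x hx
        have hx := Finset.mem_filter.1 hx
        exact (hR1 x (hLR x (hU hx.1) hx.2)).1


theorem hall {d : ℕ} (k l n : ℕ) (hl : 0 < l) (X : Finset (Fin d → ℕ)) (δ : ℝ) (hδ : 0 ≤ δ)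
    (hX : ∀ x ∈ X, ∀ i, x i < l * 2^k) (hcard : X.card = n^d)
    (hsplit : ∀ r a : Fin d → ℕ, ∀ i, (∀ j, r j ≤ k) → r i < k → (∀ j, r i ≤ r j) → (∀ j, r j ≤ r i + 1) →
      |((bx k l X (Function.update r i (r i + 1)) (Function.update a i (2 * a i))).card : ℝ) -
        (bx k l X (Function.update r i (r i + 1)) (Function.update a i (2 * a i + 1))).card| * ((n:ℝ) / 2^(r i))
        ≤ 2 * δ * (bx k l X r a).card) :
    ∃ f : (Fin d → ℕ) → (Fin d → ℤ), (∀ x ∈ X, ∀ y ∈ X, f x = f y → x = y) ∧ (∀ x ∈ X, f x ∈ grid d n) ∧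
      ∀ x ∈ X, ∀ i, |(f x i : ℝ) - x i * ((n:ℝ) / (l * 2^k))| ≤ (n:ℝ)/2^k + d * k * δ + 1 := by
  have hb := bx_zero_compl k l X hX
  obtain ⟨ρ, h1, h2⟩ := tree k l n hl X δ hδ hsplit (d * k) 0 0 (by simp) (by simp) (by simp)
    (fun _ => 0) (fun _ => n) 0 (by simp) (by rw [hb, hcard]; simp) (by simp) (by simp)
  rw [hb] at h1 h2
  classical
  let cube : (Fin d → ℤ) → Set (Fin d → ℝ) := fun g => Set.pi Set.univ (fun i => Set.Ioc ((g i : ℝ) - 1) (g i))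
  let t : X → Finset (Fin d → ℤ) := fun x => (grid d n).filter (fun g => (cube g ∩ ρ x).Nonempty)
  have hceil : ∀ x ∈ X, ∀ z ∈ ρ x, ∃ g ∈ grid d n, z ∈ cube g := by
    intro x hx z hz
    have hz' := (h1 x hx).2.1 hz
    refine ⟨fun i => ⌈z i⌉, ?_, ?_⟩
    · simp only [grid, Fintype.mem_piFinset, Finset.mem_Icc]
      intro i
      have := hz' i (Set.mem_univ i)
      beta_reduce at this
      constructor
      · exact Int.one_le_ceil_iff.2 this.1
      · exact Int.ceil_le.2 (by exact_mod_cast this.2)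
    · intro i _
      exact ⟨by linarith [Int.ceil_lt_add_one (z i)], Int.le_ceil _⟩
  have hH : ∀ s : Finset X, s.card ≤ (s.biUnion t).card := by
    intro s
    have hU := h2 (s.image Subtype.val) (by intro x hx; obtain ⟨y, _, rfl⟩ := Finset.mem_image.1 hx; exact y.2)
    rw [Finset.card_image_of_injective _ Subtype.val_injective] at hU
    have hsub : (⋃ x ∈ s.image Subtype.val, ρ x) ⊆ ⋃ g ∈ s.biUnion t, cube g := by
      intro z hz
      simp only [Set.mem_iUnion] at hz ⊢
      obtain ⟨x, hx, hz⟩ := hz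
      obtain ⟨y, hy, rfl⟩ := Finset.mem_image.1 hx
      obtain ⟨g, hg, hzg⟩ := hceil y y.2 z hz
      exact ⟨g, Finset.mem_biUnion.2 ⟨y, hy, Finset.mem_filter.2 ⟨hg, ⟨z, hzg, hz⟩⟩⟩, hzg⟩
    have h3 := hU.trans ((measure_mono hsub).trans (measure_biUnion_finset_le _ _))
    have h4 : ∀ g, volume (cube g) = 1 := by
      intro g
      simp only [cube]
      rw [Real.volume_pi_Ioc]
      simp
    simp only [h4, Finset.sum_const, nsmul_eq_mul, mul_one] at h3
    exact_mod_cast h3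
  obtain ⟨f, hf1, hf2⟩ := (Finset.all_card_le_biUnion_card_iff_exists_injective t).1 hH
  refine ⟨fun x => if h : x ∈ X then f ⟨x, h⟩ else 0, ?_, ?_, ?_⟩
  · intro x hx y hy h
    simp only [hx, hy, dif_pos] at h
    exact congrArg Subtype.val (hf1 h)
  · intro x hx
    simp only [hx, dif_pos]
    exact (Finset.mem_filter.1 (hf2 ⟨x, hx⟩)).1
  · intro x hx i
    simp only [hx, dif_pos]
    obtain ⟨z, hz1, hz2⟩ := (Finset.mem_filter.1 (hf2 ⟨x, hx⟩)).2
    have g1 := hz1 i (Set.mem_univ i)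
    have g2 := (h1 x hx).2.2 z hz2 i
    beta_reduce at g1
    push_cast at g2
    rw [abs_le] at *
    constructor <;> linarith [g1.1, g1.2]

lemma coord_le_zdist {d : ℕ} (x y : Fin d → ℤ) (i : Fin d) : |(x i : ℝ) - y i| ≤ zdist x y := by
  unfold zdist
  apply Real.le_sqrt_of_sq_le
  rw [sq_abs]
  exact Finset.single_le_sum (f := fun i => ((x i : ℝ) - y i)^2) (fun j _ => sq_nonneg _) (Finset.mem_univ i)

theorem Fbound {d : ℕ} (k l n : ℕ) (hl : 0 < l) (S : Finset (Fin d → ℤ)) (δ : ℝ) (hδ : 0 ≤ δ)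
    (hS : ∀ x ∈ S, ∀ i, 1 ≤ x i ∧ x i ≤ (l * 2^k : ℕ)) (hcard : S.card = n^d) (hnm : n ≤ l * 2^k)
    (X : Finset (Fin d → ℕ)) (hX : X = S.image (fun x i => (x i - 1).toNat))
    (hsplit : ∀ r a : Fin d → ℕ, ∀ i, (∀ j, r j ≤ k) → r i < k → (∀ j, r i ≤ r j) → (∀ j, r j ≤ r i + 1) →
      |((bx k l X (Function.update r i (r i + 1)) (Function.update a i (2 * a i))).card : ℝ) -
        (bx k l X (Function.update r i (r i + 1)) (Function.update a i (2 * a i + 1))).card| * ((n:ℝ) / 2^(r i))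
        ≤ 2 * δ * (bx k l X r a).card) :
    Fleast d n S ≤ Real.sqrt d * (1 + 2 * ((n:ℝ)/2^k + d * k * δ + 1)) := by
  set D : ℝ := (n:ℝ)/2^k + d * k * δ + 1 with hD
  have hD0 : 0 ≤ D := by positivity
  let ψ : (Fin d → ℤ) → (Fin d → ℕ) := fun x i => (x i - 1).toNat
  have hψ : ∀ x ∈ S, ∀ i, ((ψ x i : ℕ) : ℤ) = x i - 1 := by
    intro x hx i
    exact Int.toNat_of_nonneg (by linarith [(hS x hx i).1])
  have hinj : ∀ x ∈ S, ∀ y ∈ S, ψ x = ψ y → x = y := by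
    intro x hx y hy h
    funext i
    have h1 := hψ x hx i
    have h2 := hψ y hy i
    rw [h] at h1
    linarith
  have hXc : X.card = n^d := by
    rw [hX, ← hcard]
    exact Finset.card_image_of_injOn (fun x hx y hy h => hinj x hx y hy h)
  have hmem : ∀ x ∈ S, ψ x ∈ X := fun x hx => by rw [hX]; exact Finset.mem_image_of_mem _ hx
  obtain ⟨f, hf1, hf2, hf3⟩ := hall k l n hl X δ hδ (by
    intro y hy i
    rw [hX] at hy
    obtain ⟨x, hx, rfl⟩ := Finset.mem_image.1 hy
    have h1 := hψ x hx i
    have h2 := (hS x hx i).2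
    have : ((ψ x i : ℕ) : ℤ) < ((l * 2^k : ℕ) : ℤ) := by linarith
    exact_mod_cast this) hXc hsplit
  by_cases hbdd : BddBelow {L : ℝ | ∃ f : (Fin d → ℤ) → (Fin d → ℤ),
    (∀ x ∈ S, f x ∈ grid d n) ∧
    (∀ y ∈ grid d n, ∃ x ∈ S, f x = y) ∧
    (∀ x ∈ S, ∀ y ∈ S, zdist (f x) (f y) ≤ L * zdist x y)}
  swap
  · unfold Fleast
    rw [Real.sInf_of_not_bddBelow hbdd]
    positivity
  apply csInf_le hbdd
  refine ⟨fun x => f (ψ x), fun x hx => hf2 _ (hmem x hx), ?_, ?_⟩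
  · have hgc : (grid d n).card = n^d := by
      unfold grid
      rw [Fintype.card_piFinset]
      simp
    have hs := Finset.surj_on_of_inj_on_of_card_le (s := S) (t := grid d n) (fun x _ => f (ψ x))
      (fun x hx => hf2 _ (hmem x hx))
      (fun x y hx hy h => hinj x hx y hy (hf1 _ (hmem x hx) _ (hmem y hy) h)) (by rw [hgc, hcard])
    intro y hy
    obtain ⟨x, hx, h⟩ := hs y hy
    exact ⟨x, hx, h.symm⟩
  · intro x hx y hy
    by_cases hxy : x = y
    · subst hxy
      simp [zdist]
    have hz1 : 1 ≤ zdist x y := by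
      obtain ⟨i, hi⟩ := Function.ne_iff.1 hxy
      refine le_trans ?_ (coord_le_zdist x y i)
      have : 1 ≤ |x i - y i| := Int.one_le_abs (sub_ne_zero.2 hi)
      exact_mod_cast this
    set Z := zdist x y
    have hm : (0:ℝ) < (l * 2^k : ℝ) := by have : (0:ℝ) < l := by exact_mod_cast hl
                                          positivity
    have hc : ∀ i, |(f (ψ x) i : ℝ) - f (ψ y) i| ≤ (1 + 2 * D) * Z := by
      intro i
      have h1 := hf3 _ (hmem x hx) i
      have h2 := hf3 _ (hmem y hy) i
      have e1 : ((ψ x i : ℕ) : ℝ) = x i - 1 := by exact_mod_cast congrArg (Int.cast (R := ℝ)) (hψ x hx i)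
      have e2 : ((ψ y i : ℕ) : ℝ) = y i - 1 := by exact_mod_cast congrArg (Int.cast (R := ℝ)) (hψ y hy i)
      rw [e1] at h1
      rw [e2] at h2
      set q : ℝ := (n:ℝ) / (l * 2^k)
      have hq0 : 0 ≤ q := by positivity
      have hq1 : q ≤ 1 := by rw [div_le_one hm]; exact_mod_cast hnm
      have h3 : |((x i : ℝ) - y i) * q| ≤ Z := by
        rw [abs_mul, abs_of_nonneg hq0]
        have := coord_le_zdist x y i
        nlinarith [abs_nonneg ((x i : ℝ) - y i)]
      have h4 : |(f (ψ x) i : ℝ) - f (ψ y) i| ≤ Z + 2 * D := by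
        rw [← hD] at h1 h2
        rw [abs_le] at *
        constructor <;> linarith [h1.1, h1.2, h2.1, h2.2, h3.1, h3.2]
      nlinarith
    show Real.sqrt _ ≤ _
    have hb : ∑ i, ((f (ψ x) i : ℝ) - f (ψ y) i)^2 ≤ d * ((1 + 2 * D) * Z)^2 := by
      have := Finset.sum_le_card_nsmul Finset.univ (fun i => ((f (ψ x) i : ℝ) - f (ψ y) i)^2) (((1 + 2 * D) * Z)^2)
        (fun i _ => by rw [← sq_abs]; exact pow_le_pow_left₀ (abs_nonneg _) (hc i) 2)
      simpa using this
    refine (Real.sqrt_le_sqrt hb).trans ?_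
    rw [Real.sqrt_mul (by positivity), Real.sqrt_sq (by positivity), mul_assoc]


noncomputable def lamr {d : ℕ} (n : ℕ) (r : Fin d → ℕ) : ℝ := ∏ i, ((n:ℝ) / 2^(r i))

def phi {d : ℕ} {m : ℤ} (x : gridPt d m) : Fin d → ℕ := fun i => ((x i : ℤ) - 1).toNat

def Good {d : ℕ} (k l n : ℕ) (K L : ℝ) (X : Finset (Fin d → ℕ)) : Prop :=
  ∀ r a : Fin d → ℕ, (∀ i, r i ≤ k) → (∀ i, a i < 2^(r i)) →
    |((bx k l X r a).card : ℝ) - lamr n r| ≤ K * Real.sqrt (L * lamr n r)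

lemma lamr_ge {d : ℕ} (n k : ℕ) (r : Fin d → ℕ) (hr : ∀ i, r i ≤ k) : ((n:ℝ)/2^k)^d ≤ lamr n r := by
  unfold lamr
  calc ((n:ℝ)/2^k)^d = ∏ i : Fin d, ((n:ℝ)/2^k) := by rw [Finset.prod_const, Finset.card_univ, Fintype.card_fin]
    _ ≤ _ := by
      apply Finset.prod_le_prod
      · intro i _; positivity
      · intro i _
        have := hr i
        gcongr
        norm_num

lemma sqrt_lam_le (K L lam : ℝ) (hK : 0 ≤ K) (hL : 1 ≤ L) (hLK : 2 * K ≤ L) (hlam : L^3 ≤ lam) :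
    K * Real.sqrt (L * lam) ≤ lam / 2 := by
  have h0 : 0 < lam := lt_of_lt_of_le (by positivity) hlam
  have : (2 * K)^2 ≤ L^2 := pow_le_pow_left₀ (by positivity) hLK 2
  have h2 : Real.sqrt (L * lam) ≤ lam / L := by
    apply Real.sqrt_le_iff.2
    refine ⟨by positivity, ?_⟩
    rw [div_pow, le_div_iff₀ (by positivity)]
    nlinarith
  calc K * Real.sqrt (L * lam) ≤ (L/2) * (lam / L) := by
        apply mul_le_mul (by linarith) h2 (Real.sqrt_nonneg _) (by positivity)
    _ = lam / 2 := by field_simp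

theorem good_split {d : ℕ} (hd : 2 ≤ d) (k l n : ℕ) (K L s : ℝ) (hK : 0 ≤ K) (hL : 1 ≤ L) (hLK : 2 * K ≤ L)
    (hs : s = (n:ℝ)/2^k) (hsL : L^3 ≤ s^d) (X : Finset (Fin d → ℕ))
    (hX : ∀ x ∈ X, ∀ i, x i < l * 2^k) (hG : Good k l n K L X)
    (r a : Fin d → ℕ) (i : Fin d) (hrk : ∀ j, r j ≤ k) (hri : r i < k) (hbal : ∀ j, r j ≤ r i + 1) :
      |((bx k l X (Function.update r i (r i + 1)) (Function.update a i (2 * a i))).card : ℝ) -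
        (bx k l X (Function.update r i (r i + 1)) (Function.update a i (2 * a i + 1))).card| * ((n:ℝ) / 2^(r i))
        ≤ 2 * (2 * K * 2^d * s / L) * (bx k l X r a).card := by
  have hmL := bx_split k l X r a i hri 0 (by norm_num)
  have hmR := bx_split k l X r a i hri 1 (by norm_num)
  rw [add_zero] at hmL
  rcases Finset.eq_empty_or_nonempty (bx k l X r a) with hem | ⟨x, hx⟩
  · have e1 : bx k l X (Function.update r i (r i + 1)) (Function.update a i (2 * a i)) = ∅ := by
      rw [Finset.eq_empty_iff_forall_notMem]; intro x hx; have := ((hmL x).1 hx).1; rw [hem] at this; simp at this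
    have e2 : bx k l X (Function.update r i (r i + 1)) (Function.update a i (2 * a i + 1)) = ∅ := by
      rw [Finset.eq_empty_iff_forall_notMem]; intro x hx; have := ((hmR x).1 hx).1; rw [hem] at this; simp at this
    rw [e1, e2, hem]; simp
  have hxm := Finset.mem_filter.1 hx
  have har : ∀ j, a j < 2^(r j) := by
    intro j
    rw [← hxm.2 j]
    apply Nat.div_lt_of_lt_mul
    rw [mul_assoc, ← pow_add, Nat.sub_add_cancel (hrk j)]
    exact hX x hxm.1 j
  have hk' : ∀ j, Function.update r i (r i + 1) j ≤ k := by
    intro j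
    by_cases hj : j = i
    · subst hj; rw [Function.update_self]; omega
    · rw [Function.update_of_ne hj]; exact hrk j
  have hlamr' : lamr n (Function.update r i (r i + 1)) = 1/2 * lamr n r := by
    unfold lamr
    apply prod_scale _ _ i
    · rw [Function.update_self, pow_succ]; field_simp
    · intro j hj; rw [Function.update_of_ne hj]
  have g0 := hG r a hrk har
  have ha' : ∀ e < 2, ∀ j, Function.update a i (2 * a i + e) j < 2^(Function.update r i (r i + 1) j) := by
    intro e he j
    by_cases hj : j = i
    · subst hj; rw [Function.update_self, Function.update_self, pow_succ]; have := har j; omega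
    · rw [Function.update_of_ne hj, Function.update_of_ne hj]; exact har j
  have gL := hG _ _ hk' (ha' 0 (by norm_num))
  have gR := hG _ _ hk' (ha' 1 (by norm_num))
  rw [add_zero] at gL
  rw [hlamr'] at gL gR
  have hl3 : L^3 ≤ lamr n r := hsL.trans (by rw [hs]; exact lamr_ge n k r hrk)
  set lam := lamr n r with hlamdef
  have hlam0 : 0 < lam := lt_of_lt_of_le (by positivity) hl3
  have hsq := sqrt_lam_le K L lam hK hL hLK hl3
  have hmono : K * Real.sqrt (L * (1/2 * lam)) ≤ K * Real.sqrt (L * lam) := by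
    apply mul_le_mul_of_nonneg_left _ hK
    apply Real.sqrt_le_sqrt
    nlinarith [mul_pos (by linarith : 0 < L) hlam0]
  set NL : ℝ := ((bx k l X (Function.update r i (r i + 1)) (Function.update a i (2 * a i))).card : ℝ)
  set NR : ℝ := ((bx k l X (Function.update r i (r i + 1)) (Function.update a i (2 * a i + 1))).card : ℝ)
  set N : ℝ := ((bx k l X r a).card : ℝ)
  have hN : lam / 2 ≤ N := by have := (abs_le.1 g0).1; linarith
  have hLR : |NL - NR| ≤ 2 * K * Real.sqrt (L * lam) := by
    rw [abs_le] at *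
    constructor <;> linarith [gL.1, gL.2, gR.1, gR.2]
  set si : ℝ := (n:ℝ)/2^(r i) with hsi
  have hs0 : 0 ≤ s := by rw [hs]; positivity
  have hssi : s ≤ si := by
    rw [hs, hsi]; gcongr
    norm_num
  have hsi0 : 0 ≤ si := hs0.trans hssi
  have hlam2 : (si/2)^d ≤ lam := by
    rw [hlamdef]; unfold lamr
    calc (si/2)^d = ∏ j : Fin d, (si/2) := by rw [Finset.prod_const, Finset.card_univ, Fintype.card_fin]
      _ ≤ _ := by
        apply Finset.prod_le_prod
        · intro j _; positivity
        · intro j _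
          rw [hsi, div_div, ← pow_succ]
          have := hbal j
          gcongr
          norm_num
  have hkey : Real.sqrt (L * lam) * si ≤ 2^d * s / L * lam := by
    have h1 : L^3 * si^2 ≤ (2^d)^2 * s^2 * lam := by
      have hp : s^(d-2) ≤ si^(d-2) := pow_le_pow_left₀ hs0 hssi _
      have e1 : s^d = s^(d-2) * s^2 := by rw [← pow_add]; congr 1; omega
      have e2 : si^d = si^(d-2) * si^2 := by rw [← pow_add]; congr 1; omega
      have h2 : (1:ℝ) ≤ 2^d := one_le_pow₀ (by norm_num)
      calc L^3 * si^2 ≤ s^d * si^2 := by gcongr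
        _ = s^(d-2) * (s^2 * si^2) := by rw [e1]; ring
        _ ≤ si^(d-2) * (s^2 * si^2) := by gcongr
        _ = s^2 * si^d := by rw [e2]; ring
        _ = s^2 * (2^d * (si/2)^d) := by rw [← mul_pow]; congr 2; ring
        _ ≤ s^2 * (2^d * lam) := by gcongr
        _ ≤ s^2 * ((2^d)^2 * lam) := by gcongr; nlinarith
        _ = _ := by ring
    have : Real.sqrt (L * lam) * si = Real.sqrt (L * lam * si^2) := by
      rw [Real.sqrt_mul (show (0:ℝ) ≤ L * lam by positivity) (si^2), Real.sqrt_sq hsi0]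
    rw [this]
    apply Real.sqrt_le_iff.2
    refine ⟨by positivity, ?_⟩
    rw [show (2^d * s / L * lam)^2 = ((2^d)^2 * s^2 * lam) * lam / L^2 by field_simp, le_div_iff₀ (by positivity)]
    calc L * lam * si^2 * L^2 = (L^3 * si^2) * lam := by ring
      _ ≤ _ := by gcongr
  calc |NL - NR| * si ≤ (2 * K * Real.sqrt (L * lam)) * si := by gcongr
    _ = 2 * K * (Real.sqrt (L * lam) * si) := by ring
    _ ≤ 2 * K * (2^d * s / L * lam) := by gcongr
    _ = 2 * (2 * K * 2^d * s / L) * (lam / 2) := by ring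
    _ ≤ _ := by gcongr

lemma phi_inj {d : ℕ} {m : ℤ} : Function.Injective (phi (d := d) (m := m)) := by
  intro x y h
  funext i
  have h1 := congrFun h i
  have hx := Finset.mem_Icc.1 (x i).2
  have hy := Finset.mem_Icc.1 (y i).2
  unfold phi at h1
  apply Subtype.ext
  omega

lemma card_box {d : ℕ} {m : ℤ} (k l : ℕ) (hl : 0 < l) (hm : m = (l * 2^k : ℕ)) (r a : Fin d → ℕ)
    (hr : ∀ i, r i ≤ k) (ha : ∀ i, a i < 2^(r i)) :
    (Finset.univ.filter (fun x : gridPt d m => ∀ i, phi x i / (l * 2^(k - r i)) = a i)).card =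
      ∏ i, (l * 2^(k - r i)) := by
  rw [← Finset.card_image_of_injective _ (phi_inj)]
  have : (Finset.univ.filter (fun x : gridPt d m => ∀ i, phi x i / (l * 2^(k - r i)) = a i)).image phi =
      Fintype.piFinset (fun i => Finset.Ico (a i * (l * 2^(k - r i))) ((a i + 1) * (l * 2^(k - r i)))) := by
    ext y
    simp only [Finset.mem_image, Finset.mem_filter, Finset.mem_univ, true_and, Fintype.mem_piFinset, Finset.mem_Ico]
    have hw : ∀ i, 0 < l * 2^(k - r i) := fun i => by positivity
    constructor
    · rintro ⟨x, hx, rfl⟩ i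
      have := (Nat.div_eq_iff (hw i)).1 (hx i)
      have hwi := hw i
      refine ⟨this.1, ?_⟩
      have := this.2
      rw [add_mul]
      omega
    · intro h
      have hlt : ∀ i, y i < l * 2^k := by
        intro i
        refine (h i).2.trans_le ?_
        calc (a i + 1) * (l * 2^(k - r i)) ≤ 2^(r i) * (l * 2^(k - r i)) := Nat.mul_le_mul_right _ (ha i)
          _ = l * (2^(r i) * 2^(k - r i)) := by ring
          _ = l * 2^k := by rw [← pow_add, Nat.add_sub_cancel' (hr i)]
      refine ⟨fun i => ⟨(y i : ℤ) + 1, Finset.mem_Icc.2 ⟨by omega, ?_⟩⟩, ?_, ?_⟩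
      · rw [hm]; have := hlt i; exact_mod_cast this
      · intro i
        simp only [phi, add_sub_cancel_right, Int.toNat_natCast]
        have hwi := hw i
        rw [Nat.div_eq_iff hwi]
        have := h i
        refine ⟨this.1, ?_⟩
        have := this.2
        rw [add_mul] at this
        omega
      · funext i
        simp [phi]
  rw [this, Fintype.card_piFinset]
  apply Finset.prod_congr rfl
  intro i _
  rw [Nat.card_Ico, ← Nat.sub_mul]; simp

lemma card_gridPt {d : ℕ} {m : ℤ} (M : ℕ) (hm : m = M) : Fintype.card (gridPt d m) = M^d := by
  subst hm
  simp [gridPt]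

lemma bx_image {d : ℕ} {m : ℤ} (k l : ℕ) (S : Finset (gridPt d m)) (r a : Fin d → ℕ) :
    (bx k l (S.image phi) r a).card = 
      (S ∩ Finset.univ.filter (fun x : gridPt d m => ∀ i, phi x i / (l * 2^(k - r i)) = a i)).card := by
  rw [← Finset.card_image_of_injective (S ∩ _) (phi_inj)]
  congr 1
  ext y
  simp only [bx, Finset.mem_filter, Finset.mem_image, Finset.mem_inter, Finset.mem_univ, true_and]
  constructor
  · rintro ⟨⟨x, hx, rfl⟩, h⟩; exact ⟨x, ⟨hx, h⟩, rfl⟩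
  · rintro ⟨x, ⟨hx, h⟩, rfl⟩; exact ⟨⟨x, hx, rfl⟩, h⟩

open Finset Classical in
theorem bad_card {d : ℕ} {m : ℤ} (k l n : ℕ) (hl : 0 < l) (hm : m = (l * 2^k : ℕ)) (hnm : n ≤ l * 2^k)
    (K L : ℝ) (hK : 0 ≤ K) (hL : 1 ≤ L) (hLK : 2 * K ≤ L) (hsL : L^3 ≤ ((n:ℝ)/2^k)^d) :
    (Set.ncard {S : Config d m (n^d) | ¬ Good k l n K L (S.1.image phi)} : ℝ) ≤
      Fintype.card (Config d m (n^d)) * (((k+1)^d * (2^k)^d) * (2 * Real.exp (-(K^2 * L / 4)))) := by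
  have hcV : Fintype.card (gridPt d m) = (l * 2^k)^d := card_gridPt _ hm
  have hcC : Fintype.card (Config d m (n^d)) = (Fintype.card (gridPt d m)).choose (n^d) := by
    exact Fintype.card_finset_len _
  have hN : n^d ≤ Fintype.card (gridPt d m) := by rw [hcV]; exact Nat.pow_le_pow_left hnm d
  have h0 : 0 < Fintype.card (gridPt d m) := by rw [hcV]; positivity
  let Bx : (Fin d → ℕ) → (Fin d → ℕ) → Finset (gridPt d m) := fun r a =>
    Finset.univ.filter (fun x : gridPt d m => ∀ i, phi x i / (l * 2^(k - r i)) = a i)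
  let idx : Finset ((Fin d → ℕ) × (Fin d → ℕ)) :=
    ((Fintype.piFinset fun _ => range (k+1)) ×ˢ (Fintype.piFinset fun _ => range (2^k)))
  let bad : (Fin d → ℕ) × (Fin d → ℕ) → Finset (Finset (gridPt d m)) := fun q =>
    {S ∈ powersetCard (n^d) univ | (∀ i, q.2 i < 2^(q.1 i)) ∧ K * Real.sqrt (L * lamr n q.1) < |(#(S ∩ Bx q.1 q.2) : ℝ) - lamr n q.1|}
  have h1 : Set.ncard {S : Config d m (n^d) | ¬ Good k l n K L (S.1.image phi)} ≤ #(idx.biUnion bad) := by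
    rw [← Set.ncard_image_of_injective _ Subtype.val_injective, ← Set.ncard_coe_finset]
    apply Set.ncard_le_ncard _ (Finset.finite_toSet _)
    rintro S ⟨S', hS', rfl⟩
    simp only [Good, Set.mem_ofPred_eq] at hS'
    push Not at hS'
    obtain ⟨r, a, hr, ha, hlt⟩ := hS'
    rw [bx_image] at hlt
    simp only [mem_coe, mem_biUnion]
    refine ⟨(r, a), ?_, ?_⟩
    · simp only [idx, mem_product, Fintype.mem_piFinset, mem_range]
      exact ⟨fun i => Nat.lt_succ_of_le (hr i), fun i => (ha i).trans_le (Nat.pow_le_pow_right (by norm_num) (hr i))⟩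
    · simp only [bad, mem_filter, mem_powersetCard, subset_univ, true_and]
      exact ⟨S'.2, ha, hlt⟩
  have h2 : ∀ q ∈ idx, (#(bad q) : ℝ) ≤ Fintype.card (Config d m (n^d)) * (2 * Real.exp (-(K^2 * L / 4))) := by
    rintro ⟨r, a⟩ hq
    simp only [idx, mem_product, Fintype.mem_piFinset, mem_range] at hq
    have hr : ∀ i, r i ≤ k := fun i => Nat.le_of_lt_succ (hq.1 i)
    by_cases ha : ∀ i, a i < 2^(r i)
    · have hl3 : L^3 ≤ lamr n r := hsL.trans (lamr_ge n k r hr)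
      have hlam0 : 0 < lamr n r := lt_of_lt_of_le (by positivity) hl3
      have hsq := sqrt_lam_le K L _ hK hL hLK hl3
      have hcb := card_box (m := m) k l hl hm r a hr ha
      have ht := tail (n^d) hN h0 (Bx r a) (lamr n r) (K * Real.sqrt (L * lamr n r)) (by
        simp only [Bx]
        rw [hcb, hcV]
        unfold lamr
        have hlR : (0:ℝ) < l := by exact_mod_cast hl
        rw [prod_div_distrib]
        push_cast
        rw [prod_const, card_univ, Fintype.card_fin]
        have : (∏ i : Fin d, ((l:ℝ) * 2^(k - r i))) * (∏ i, (2:ℝ)^(r i)) = (l * 2^k)^d := by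
          rw [← prod_mul_distrib]
          rw [prod_congr rfl (g := fun _ => (l:ℝ) * 2^k)]
          · simp
          · intro i _; rw [mul_assoc, ← pow_add, Nat.sub_add_cancel (hr i)]
        have hpp : (0:ℝ) < ∏ i, (2:ℝ)^(r i) := prod_pos (fun i _ => by positivity)
        rw [← this]
        have hpp2 : (0:ℝ) < ∏ i : Fin d, ((l:ℝ) * 2^(k - r i)) := prod_pos (fun i _ => by positivity)
        set P1 := ∏ i : Fin d, ((l:ℝ) * 2^(k - r i))
        set P2 := ∏ i, (2:ℝ)^(r i)
        field_simp) hlam0 (by positivity) (by linarith)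
      rw [mul_pow, Real.sq_sqrt (by positivity),
        show K^2 * (L * lamr n r) / (4 * lamr n r) = K^2 * L / 4 by field_simp] at ht
      rw [hcC]
      refine le_trans ?_ ht
      norm_cast
      apply card_le_card
      intro S hS
      simp only [bad, mem_filter] at hS ⊢
      exact ⟨hS.1, hS.2.2⟩
    · have : bad (r, a) = ∅ := by
        simp only [bad]
        rw [filter_eq_empty_iff]
        intro S _ h
        exact ha h.1
      rw [this]
      simp only [card_empty, Nat.cast_zero]
      positivity
  have h3 : #idx = (k+1)^d * (2^k)^d := by
    simp [idx, card_product, Fintype.card_piFinset]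
  calc (Set.ncard {S : Config d m (n^d) | ¬ Good k l n K L (S.1.image phi)} : ℝ) ≤ #(idx.biUnion bad) := by exact_mod_cast h1
    _ ≤ ∑ q ∈ idx, (#(bad q) : ℝ) := by exact_mod_cast card_biUnion_le
    _ ≤ ∑ q ∈ idx, (Fintype.card (Config d m (n^d)) * (2 * Real.exp (-(K^2 * L / 4))) : ℝ) := sum_le_sum h2
    _ = _ := by rw [sum_const, nsmul_eq_mul, h3]; push_cast; ring


theorem good_F {d : ℕ} (hd : 2 ≤ d) {m : ℤ} (k l n : ℕ) (hl : 0 < l) (hm : m = (l * 2^k : ℕ)) (hnm : n ≤ l * 2^k)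
    (K L s : ℝ) (hK : 0 ≤ K) (hL : 1 ≤ L) (hLK : 2 * K ≤ L)
    (hs : s = (n:ℝ)/2^k) (hsL : L^3 ≤ s^d) (S : Config d m (n^d)) (hG : Good k l n K L (S.1.image phi)) :
    Fleast d n (toLattice S.1) ≤ Real.sqrt d * (1 + 2 * (s + d * k * (2 * K * 2^d * s / L) + 1)) := by
  have hs0 : 0 ≤ s := by rw [hs]; positivity
  have h1 : ∀ x ∈ toLattice S.1, ∀ i, 1 ≤ x i ∧ x i ≤ (l * 2^k : ℕ) := by
    intro x hx i
    unfold toLattice at hx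
    obtain ⟨y, _, rfl⟩ := Finset.mem_image.1 hx
    have := Finset.mem_Icc.1 (y i).2
    exact ⟨this.1, this.2.trans hm.le⟩
  have h2 : (toLattice S.1).card = n^d := by
    unfold toLattice
    rw [Finset.card_image_of_injective, S.2]
    intro x y h
    funext i
    exact Subtype.ext (congrFun h i)
  have h3 : S.1.image phi = (toLattice S.1).image (fun x i => (x i - 1).toNat) := by
    unfold toLattice
    rw [Finset.image_image]
    rfl
  have hX : ∀ x ∈ S.1.image phi, ∀ i, x i < l * 2^k := by
    intro x hx i
    obtain ⟨y, _, rfl⟩ := Finset.mem_image.1 hx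
    have := Finset.mem_Icc.1 (y i).2
    simp only [phi]
    omega
  have := Fbound k l n hl (toLattice S.1) (2 * K * 2^d * s / L) (by positivity) h1 h2 hnm (S.1.image phi) h3
    (fun r a i hrk hri _ hb => good_split hd k l n K L s hK hL hLK hs hsL _ hX hG r a i hrk hri hb)
  rw [← hs] at this
  exact this

noncomputable def kk (d n : ℕ) : ℕ := Nat.log 2 ⌊(n:ℝ) / Real.logb 2 n ^ (3 / (d:ℝ))⌋₊

noncomputable def ll (d : ℕ) (e : ℕ → ℝ) (n : ℕ) : ℕ := ⌈e n * n / 2^(kk d n)⌉₊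

noncomputable def cc (d : ℕ) (e : ℕ → ℝ) (n : ℕ) : ℝ :=
  if n = 0 then e n else ((ll d e n * 2^(kk d n) : ℕ) : ℝ) / n

lemma logb_le_self (n : ℕ) (hn : 1 ≤ n) : Real.logb 2 n ≤ n := by
  rw [Real.logb_le_iff_le_rpow (by norm_num) (by exact_mod_cast hn), Real.rpow_natCast]
  exact_mod_cast Nat.lt_two_pow_self.le

lemma one_le_logb (n : ℕ) (hn : 2 ≤ n) : 1 ≤ Real.logb 2 n := by
  rw [Real.le_logb_iff_rpow_le (by norm_num) (by positivity), Real.rpow_one]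
  exact_mod_cast hn

lemma kk_bound (d n : ℕ) (hd : 2 ≤ d) (hn : 2 ≤ n) :
    (2:ℝ)^(kk d n) * Real.logb 2 n ^ ((d:ℝ)⁻¹) ≤ n := by
  have hL := one_le_logb n hn
  have hL2 := logb_le_self n (by omega)
  have hd' : (1:ℝ) ≤ d := by exact_mod_cast (by omega : 1 ≤ d)
  unfold kk
  set L := Real.logb 2 n
  set q := ⌊(n:ℝ) / L ^ (3 / (d:ℝ))⌋₊ with hq
  by_cases h0 : q = 0
  · rw [h0]
    simp only [Nat.log_zero_right, pow_zero, one_mul]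
    calc L ^ ((d:ℝ)⁻¹) ≤ L ^ (1:ℝ) := Real.rpow_le_rpow_of_exponent_le hL (inv_le_one_of_one_le₀ hd')
      _ = L := Real.rpow_one _
      _ ≤ n := hL2
  · have h1 : ((2^(Nat.log 2 q) : ℕ) : ℝ) ≤ q := by exact_mod_cast Nat.pow_log_le_self 2 h0
    have h2 : (q:ℝ) ≤ (n:ℝ) / L ^ (3 / (d:ℝ)) := Nat.floor_le (by positivity)
    push_cast at h1
    have h3 : L ^ ((d:ℝ)⁻¹) ≤ L ^ (3 / (d:ℝ)) := by
      apply Real.rpow_le_rpow_of_exponent_le hL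
      rw [inv_eq_one_div]; gcongr; norm_num
    have hp : 0 < L ^ (3 / (d:ℝ)) := by positivity
    calc (2:ℝ)^(Nat.log 2 q) * L ^ ((d:ℝ)⁻¹) ≤ ((n:ℝ) / L ^ (3 / (d:ℝ))) * L ^ (3 / (d:ℝ)) := by
          apply mul_le_mul (h1.trans h2) h3 (by positivity) (by positivity)
      _ = n := by field_simp

lemma ll_le (d n : ℕ) (e : ℕ → ℝ) (he : 1 ≤ e n) : 
    e n * n ≤ ((ll d e n * 2^(kk d n) : ℕ) : ℝ) ∧ ((ll d e n * 2^(kk d n) : ℕ) : ℝ) ≤ e n * n + 2^(kk d n) := by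
  have h1 : e n * n / 2^(kk d n) ≤ ll d e n := Nat.le_ceil _
  have h2 : (ll d e n : ℝ) < e n * n / 2^(kk d n) + 1 := Nat.ceil_lt_add_one (by positivity)
  have hp : (0:ℝ) < 2^(kk d n) := by positivity
  push_cast
  constructor
  · rwa [div_le_iff₀ hp] at h1
  · have := mul_le_mul_of_nonneg_right h2.le hp.le
    rw [add_mul, div_mul_cancel₀ _ hp.ne', one_mul] at this
    exact this

lemma n_le_ll (d n : ℕ) (e : ℕ → ℝ) (he : 1 ≤ e n) : n ≤ ll d e n * 2^(kk d n) := by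
  have := (ll_le d n e he).1
  have h2 : (n:ℝ) ≤ e n * n := le_mul_of_one_le_left (by positivity) he
  exact_mod_cast h2.trans this

lemma cc_ge (d n : ℕ) (e : ℕ → ℝ) (he : 1 ≤ e n) : e n ≤ cc d e n := by
  unfold cc
  split_ifs with h
  · exact le_rfl
  · have hn : (0:ℝ) < n := by exact_mod_cast Nat.pos_of_ne_zero h
    rw [le_div_iff₀ hn]
    exact (ll_le d n e he).1

lemma cc_close (d n : ℕ) (hd : 2 ≤ d) (hn : 2 ≤ n) (e : ℕ → ℝ) (he : 1 ≤ e n) :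
    |cc d e n - e n| ≤ 2 ^ (d + 8) / Real.logb 2 n ^ ((d : ℝ)⁻¹) := by
  have h1 := cc_ge d n e he
  have hn0 : (0:ℝ) < n := by positivity
  have hL := one_le_logb n hn
  have hp : 0 < Real.logb 2 n ^ ((d : ℝ)⁻¹) := by positivity
  rw [abs_of_nonneg (by linarith)]
  have h2 : cc d e n ≤ e n + 2^(kk d n) / n := by
    unfold cc
    rw [if_neg (by omega), div_le_iff₀ hn0, add_mul, div_mul_cancel₀ _ hn0.ne']
    exact (ll_le d n e he).2
  have h3 : (2:ℝ)^(kk d n) / n ≤ 1 / Real.logb 2 n ^ ((d : ℝ)⁻¹) := by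
    rw [div_le_div_iff₀ hn0 hp, one_mul]
    exact kk_bound d n hd hn
  calc cc d e n - e n ≤ 1 / Real.logb 2 n ^ ((d : ℝ)⁻¹) := by linarith
    _ ≤ _ := by gcongr; exact one_le_pow₀ (by norm_num)

lemma cc_floor (d n : ℕ) (hn : 1 ≤ n) (e : ℕ → ℝ) : ⌊cc d e n * n⌋ = ((ll d e n * 2^(kk d n) : ℕ) : ℤ) := by
  have hn0 : (n:ℝ) ≠ 0 := by positivity
  unfold cc
  rw [if_neg (by omega), div_mul_cancel₀ _ hn0]
  exact Int.floor_natCast _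

lemma kk_props (d n : ℕ) (hd : 2 ≤ d) (hn : 2 ≤ n) (h : Real.logb 2 n ^ 2 ≤ n) :
    Real.logb 2 n ^ 3 ≤ ((n:ℝ)/2^(kk d n))^d ∧ (n:ℝ)/2^(kk d n) ≤ 2 * Real.logb 2 n ^ (3 / (d:ℝ)) ∧
    2^(kk d n) ≤ n ∧ (kk d n : ℝ) ≤ Real.logb 2 n := by
  have hL := one_le_logb n hn
  have hd' : (2:ℝ) ≤ d := by exact_mod_cast hd
  have h5 : 2^(kk d n) ≤ n ∧ Real.logb 2 n ^ (3 / (d:ℝ)) ≤ (n:ℝ)/2^(kk d n) ∧ (n:ℝ)/2^(kk d n) ≤ 2 * Real.logb 2 n ^ (3 / (d:ℝ)) := by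
    unfold kk
    set L := Real.logb 2 n
    set T := L ^ (3 / (d:ℝ)) with hT
    have hT1 : 1 ≤ T := Real.one_le_rpow hL (by positivity)
    have hTn : T ≤ n := by
      refine le_trans ?_ h
      rw [← Real.rpow_natCast]
      apply Real.rpow_le_rpow_of_exponent_le hL
      rw [div_le_iff₀ (by positivity)]
      push_cast; linarith
    set q := ⌊(n:ℝ) / T⌋₊ with hq
    have hq0 : q ≠ 0 := by
      have : 0 < q := Nat.floor_pos.2 (by rw [le_div_iff₀ (by positivity)]; linarith)
      omega
    have h1 : ((2^(Nat.log 2 q) : ℕ) : ℝ) ≤ q := by exact_mod_cast Nat.pow_log_le_self 2 hq0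
    have h2 : (q:ℝ) ≤ (n:ℝ) / T := Nat.floor_le (by positivity)
    have h3 : (n:ℝ) / T < q + 1 := Nat.lt_floor_add_one _
    have h4 : ((q + 1 : ℕ) : ℝ) ≤ (2^(Nat.log 2 q + 1) : ℕ) := by
      exact_mod_cast Nat.lt_pow_succ_log_self (by norm_num) q
    push_cast at h1 h4
    have hp : (0:ℝ) < 2^(Nat.log 2 q) := by positivity
    have hT0 : 0 < T := by linarith
    have h6 := h1.trans h2
    rw [le_div_iff₀ hT0] at h6
    have h7 := h3.le.trans h4
    rw [div_le_iff₀ hT0, pow_succ] at h7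
    refine ⟨?_, ?_, ?_⟩
    · have : (2:ℝ)^(Nat.log 2 q) ≤ n := by nlinarith
      exact_mod_cast this
    · rw [le_div_iff₀ hp]; linarith
    · rw [div_le_iff₀ hp]; linarith
  refine ⟨?_, h5.2.2, h5.1, ?_⟩
  · calc Real.logb 2 n ^ 3 = (Real.logb 2 n ^ (3 / (d:ℝ)))^d := by
          rw [← Real.rpow_natCast, ← Real.rpow_natCast, ← Real.rpow_mul (by linarith)]
          congr 1
          field_simp
          norm_num
      _ ≤ _ := pow_le_pow_left₀ (by positivity) h5.2.1 d
  · rw [Real.le_logb_iff_rpow_le (by norm_num) (by positivity), Real.rpow_natCast]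
    exact_mod_cast h5.1

lemma ev_large (d : ℕ) : ∀ᶠ n : ℕ in Filter.atTop, 2 ≤ n ∧ 2 * (4 * (d:ℝ)) ≤ Real.logb 2 n ∧ Real.logb 2 n ^ 2 ≤ n := by
  have h1 : Filter.Tendsto (fun n : ℕ => Real.logb 2 n) Filter.atTop Filter.atTop :=
    (Real.tendsto_logb_atTop (by norm_num)).comp tendsto_natCast_atTop_atTop
  have h2 : (fun x : ℝ => Real.log x ^ 2) =o[Filter.atTop] id := Real.isLittleO_pow_log_id_atTop
  have hl2 : 0 < Real.log 2 := Real.log_pos (by norm_num)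
  have h3 := tendsto_natCast_atTop_atTop (R := ℝ) |>.eventually (h2.bound (show 0 < Real.log 2 ^ 2 by positivity))
  filter_upwards [Filter.eventually_ge_atTop 2, h1.eventually_ge_atTop (2 * (4 * (d:ℝ))), h3] with n hn hL h
  refine ⟨hn, hL, ?_⟩
  simp only [id, Real.norm_eq_abs, abs_pow, sq_abs, Nat.abs_cast] at h
  rw [Real.logb, div_pow, div_le_iff₀ (by positivity), mul_comm]
  exact h

lemma bad_prob (d n k : ℕ) (hd : 2 ≤ d) (hn : 2 ≤ n) (hk : 2^k ≤ n) :
    ((((k:ℝ)+1)^d * (2^k)^d) * (2 * Real.exp (-((4*(d:ℝ))^2 * Real.logb 2 n / 4)))) ≤ 2 * (1 / (n:ℝ)^2) := by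
  have hn0 : (0:ℝ) < n := by positivity
  have hkR : (2:ℝ)^k ≤ n := by exact_mod_cast hk
  have hk1 : (k:ℝ) + 1 ≤ n := by
    have : k + 1 ≤ 2^k := Nat.lt_two_pow_self
    exact_mod_cast this.trans hk
  have hl2 : 0 < Real.log 2 := Real.log_pos (by norm_num)
  have hl2' : Real.log 2 ≤ 1 := by have := Real.log_le_sub_one_of_pos (show (0:ℝ) < 2 by norm_num); linarith
  have hln : 0 ≤ Real.log n := Real.log_nonneg (by exact_mod_cast (by omega : 1 ≤ n))
  have hL : Real.log n ≤ Real.logb 2 n := by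
    rw [Real.logb, le_div_iff₀ hl2]; nlinarith
  have he : Real.exp (-((4*(d:ℝ))^2 * Real.logb 2 n / 4)) ≤ 1 / (n:ℝ)^(4*d^2) := by
    rw [one_div, ← Real.exp_log (show 0 < ((n:ℝ)^(4*d^2))⁻¹ by positivity), Real.log_inv, Real.log_pow]
    apply Real.exp_le_exp.2
    push_cast
    nlinarith [sq_nonneg (d:ℝ), mul_le_mul_of_nonneg_left hL (sq_nonneg (d:ℝ))]
  calc _ ≤ ((n:ℝ)^d * (n:ℝ)^d) * (2 * (1 / (n:ℝ)^(4*d^2))) := by gcongr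
    _ = 2 * ((n:ℝ)^(2*d) / (n:ℝ)^(4*d^2)) := by rw [← pow_add, ← two_mul]; ring
    _ ≤ _ := by
      apply mul_le_mul_of_nonneg_left _ (by norm_num)
      rw [div_le_div_iff₀ (by positivity) (by positivity), one_mul, ← pow_add]
      apply pow_le_pow_right₀ (by exact_mod_cast (by omega : 1 ≤ n))
      nlinarith

lemma final_C (d : ℕ) (k L s T : ℝ) (hk : 0 ≤ k) (hkL : k ≤ L) (hL : 1 ≤ L) (hs0 : 0 ≤ s) (hs : s ≤ 2 * T) (hT : 1 ≤ T) :
    Real.sqrt d * (1 + 2 * (s + d * k * (2 * (4 * d) * 2^d * s / L) + 1)) ≤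
      (Real.sqrt d * (3 + 2 * (2 + d * (2 * (4 * d) * 2^d * 2)))) * T := by
  have hkL' : k / L ≤ 1 := by rw [div_le_one (by linarith)]; exact hkL
  have h1 : d * k * (2 * (4 * d) * 2^d * s / L) ≤ d * (2 * (4 * d) * 2^d * (2*T)) := by
    calc d * k * (2 * (4 * d) * 2^d * s / L) = (d * (2 * (4 * d) * 2^d * s)) * (k / L) := by ring
      _ ≤ (d * (2 * (4 * d) * 2^d * s)) * 1 := by gcongr
      _ ≤ _ := by rw [mul_one]; gcongr
  rw [mul_assoc (Real.sqrt d)]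
  apply mul_le_mul_of_nonneg_left _ (Real.sqrt_nonneg _)
  calc 1 + 2 * (s + d * k * (2 * (4 * d) * 2^d * s / L) + 1) ≤ 1 + 2 * (2 * T + d * (2 * (4 * d) * 2^d * (2*T)) + 1) := by linarith
    _ = 3 + 2 * (2 + d * (2 * (4 * d) * 2^d * 2)) * T := by ring
    _ ≤ 3 * T + 2 * (2 + d * (2 * (4 * d) * 2^d * 2)) * T := by linarith
    _ = _ := by ring

lemma bc_one {Ω : Type*} [MeasurableSpace Ω] (μ : Measure Ω) (huniv : μ Set.univ = 1) (p : ℕ → Ω → Prop)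
    (hsum : ∑' n, μ {ω | p n ω} ≠ ⊤) (G : Set Ω) (h : ∀ ω, (∀ᶠ n in Filter.atTop, ¬ p n ω) → ω ∈ G) : μ G = 1 := by
  have hBC := measure_setOfPred_frequently_eq_zero hsum
  have hsub : Gᶜ ⊆ {ω | ∃ᶠ n in Filter.atTop, p n ω} := by
    intro ω hω
    by_contra hcon
    apply hω
    simp only [Set.mem_ofPred_eq, Filter.not_frequently] at hcon
    exact h ω hcon
  have hz : μ Gᶜ = 0 := measure_mono_null hsub hBC
  apply le_antisymm
  · rw [← huniv]; exact measure_mono (Set.subset_univ _)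
  · calc (1 : ENNReal) = μ (G ∪ Gᶜ) := by rw [Set.union_compl_self, huniv]
      _ ≤ μ G + μ Gᶜ := measure_union_le _ _
      _ = μ G := by rw [hz, add_zero]

lemma limsup_fin (u : ℕ → ℝ) (C : ℝ) (N : ℕ) (h : ∀ n, N ≤ n → u n ≤ C) :
    Filter.limsup (fun n : ℕ => (u n : EReal)) Filter.atTop < (⊤ : EReal) := by
  refine lt_of_le_of_lt (Filter.limsup_le_of_le (a := (C : EReal)) (by isBoundedDefault) ?_) (EReal.coe_lt_top _)
  filter_upwards [Filter.eventually_ge_atTop N] with n hn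
  exact EReal.coe_le_coe_iff.2 (h n hn)

/-- For `d ≥ 2` and any sequence `e_n ≥ 1` there is a sequence `c_n ≥ 1` with
`|c_n − e_n| ≤ 2^(d+8)/(log₂ n)^(1/d)` such that for every `α > 3`, a random sequence
`(S_n)` in `𝒢_{(c_n)}` (whose uniform product measure is characterised by its values
on cylinders, as in the hypothesis on `μ`) almost surely satisfies
`limsup_n F_n(S_n)·(log₂ n)^(−α/d) < ∞`. -/
theorem stmt_1 (d : ℕ) (hd : 2 ≤ d) (e : ℕ → ℝ) (he : ∀ n : ℕ, 1 ≤ e n) :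
    ∃ c : ℕ → ℝ, (∀ n : ℕ, 0 < c n ∧ 1 ≤ c n) ∧
      (∀ n : ℕ, 2 ≤ n → |c n - e n| ≤ 2 ^ (d + 8) / Real.logb 2 n ^ ((d : ℝ)⁻¹)) ∧
      ∀ α : ℝ, 3 < α →
        ∀ μ : Measure (∀ n : ℕ, Config d ⌊c n * n⌋ (n ^ d)),
          (∀ (J : Finset ℕ) (A : ∀ n : ℕ, Set (Config d ⌊c n * n⌋ (n ^ d))),
            μ {ω | ∀ n ∈ J, ω n ∈ A n} =
              ∏ n ∈ J, (Set.ncard (A n) : ENNReal) /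
                (Fintype.card (Config d ⌊c n * n⌋ (n ^ d)) : ENNReal)) →
          μ {ω | Filter.limsup
              (fun n : ℕ =>
                ((Fleast d n (toLattice (ω n).1) /
                    Real.logb 2 n ^ (α / (d : ℝ)) : ℝ) : EReal))
              Filter.atTop < (⊤ : EReal)} = 1 := by
  refine ⟨cc d e, fun n => ?_, fun n hn => cc_close d n hd hn e (he n), ?_⟩
  · have := cc_ge d n e (he n)
    have := he n
    constructor <;> linarith
  intro α hα μ hμ
  have hd' : (2:ℝ) ≤ d := by exact_mod_cast hd
  set Bad : ∀ n : ℕ, Set (Config d ⌊cc d e n * n⌋ (n ^ d)) := fun n =>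
    {S | ¬ Good (kk d n) (ll d e n) n (4 * (d:ℝ)) (Real.logb 2 n) (S.1.image phi)} with hBad
  have huniv : μ Set.univ = 1 := by
    have := hμ ∅ (fun _ => Set.univ)
    simpa using this
  have hmarg : ∀ n, μ {ω | ω n ∈ Bad n} = (Set.ncard (Bad n) : ENNReal) /
                (Fintype.card (Config d ⌊cc d e n * n⌋ (n ^ d)) : ENNReal) := by
    intro n
    have := hμ {n} Bad
    simpa using this
  obtain ⟨N0, hN0⟩ := Filter.eventually_atTop.1 (ev_large d)
  have hprop : ∀ n, N0 ≤ n → 0 < ll d e n ∧ n ≤ ll d e n * 2^(kk d n) := by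
    intro n hn
    have h1 := n_le_ll d n e (he n)
    refine ⟨?_, h1⟩
    rcases Nat.eq_zero_or_pos (ll d e n) with h | h
    · rw [h] at h1; have := (hN0 n hn).1; omega
    · exact h
  have hbd : ∀ n, N0 ≤ n → μ {ω | ω n ∈ Bad n} ≤ ENNReal.ofReal (2 * (1 / (n:ℝ)^2)) := by
    intro n hn
    obtain ⟨hn2, hLK, hLn⟩ := hN0 n hn
    obtain ⟨hk1, hk2, hk3, hk4⟩ := kk_props d n hd hn2 hLn
    obtain ⟨hl, hnm⟩ := hprop n hn
    rw [hmarg n]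
    have hb := bad_card (d := d) (m := ⌊cc d e n * n⌋) (kk d n) (ll d e n) n hl (cc_floor d n (by omega) e) hnm
      (4 * (d:ℝ)) (Real.logb 2 n) (by positivity) (one_le_logb n hn2) hLK hk1
    have hp := bad_prob d n (kk d n) hd hn2 hk3
    have hb2 : (Set.ncard (Bad n) : ℝ) ≤ (2 * (1 / (n:ℝ)^2)) * Fintype.card (Config d ⌊cc d e n * n⌋ (n ^ d)) := by
      refine hb.trans ?_
      rw [mul_comm]
      gcongr
    apply ENNReal.div_le_of_le_mul
    rw [← ENNReal.ofReal_natCast, ← ENNReal.ofReal_natCast, ← ENNReal.ofReal_mul (by positivity)]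
    exact ENNReal.ofReal_le_ofReal hb2
  have hsum : ∑' n, μ {ω | ω (n + N0) ∈ Bad (n + N0)} ≠ ⊤ := by
    have hs : Summable (fun n : ℕ => 2 * (1 / ((n + N0 : ℕ):ℝ)^2)) := by
      apply Summable.mul_left
      exact (summable_nat_add_iff N0).2 (Real.summable_one_div_nat_pow.2 (by norm_num))
    refine ne_top_of_le_ne_top (b := ∑' n : ℕ, ENNReal.ofReal (2 * (1 / ((n + N0 : ℕ):ℝ)^2))) ?_ ?_
    · exact hs.tsum_ofReal_ne_top
    · exact ENNReal.tsum_le_tsum (fun n => hbd (n + N0) (by omega))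
  refine bc_one μ huniv (fun n ω => ω (n + N0) ∈ Bad (n + N0)) hsum _ ?_
  intro ω hcon
  obtain ⟨N1, hN1⟩ := Filter.eventually_atTop.1 hcon
  refine limsup_fin _ (Real.sqrt d * (3 + 2 * (2 + d * (2 * (4 * d) * 2^d * 2)))) (N1 + N0) ?_
  intro n hn
  have hnN : N0 ≤ n := by omega
  obtain ⟨hn2, hLK, hLn⟩ := hN0 n hnN
  obtain ⟨hk1, hk2, hk3, hk4⟩ := kk_props d n hd hn2 hLn
  obtain ⟨hl, hnm⟩ := hprop n hnN
  have hL := one_le_logb n hn2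
  have hgood : Good (kk d n) (ll d e n) n (4 * (d:ℝ)) (Real.logb 2 n) ((ω n).1.image phi) := by
    have h := hN1 (n - N0) (by omega)
    rw [Nat.sub_add_cancel hnN] at h
    by_contra hc
    exact h hc
  have hF := good_F hd (kk d n) (ll d e n) n hl (cc_floor d n (by omega) e) hnm
    (4 * (d:ℝ)) (Real.logb 2 n) _ (by positivity) hL hLK rfl hk1 (ω n) hgood
  have hT : 1 ≤ Real.logb 2 n ^ (3 / (d:ℝ)) := Real.one_le_rpow hL (by positivity)
  have hC := final_C d (kk d n) (Real.logb 2 n) ((n:ℝ)/2^(kk d n)) _ (by positivity) hk4 hL (by positivity) hk2 hT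
  have hTT : Real.logb 2 n ^ (3 / (d:ℝ)) ≤ Real.logb 2 n ^ (α / (d:ℝ)) := by
    apply Real.rpow_le_rpow_of_exponent_le hL
    gcongr
  rw [div_le_iff₀ (by positivity)]
  refine (hF.trans hC).trans ?_
  gcongr
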